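/- Let n ≥ 1 and let B₁, B₂ ∈ ℝ^{n×n} be DAG matrices (matrices whose support digraphs contain no directed cycle), and let σ₁, σ₂ > 0 be real numbers. If (I − B₁)⁻¹ · σ₁²I · ((I − B₁)⁻¹)ᵀ = (I − B₂)⁻¹ · σ₂²I · ((I − B₂)⁻¹)ᵀ, then B₁ = B₂ and σ₁ = σ₂. (This is the covariance-matrix form of the identifiability of linear structural equation models with equal error variances: two linear SEMs X = BᵢX + σᵢU with Cov(U) = I and acyclic coefficient matrices that induce the same covariance matrix must have the same coefficient matrix and the same noise variance.) -/

import Mathlib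

/-!
Write `Mᵢ = 1 - Bᵢ`. A nonempty set of vertices of an acyclic digraph contains a vertex without
children in that set (`IsDAGMatrix.exists_sink`). Applied to the support of a permutation, this
shows that only the identity contributes to the Leibniz formula for `det Mᵢ`, so `det Mᵢ = 1`.
Comparing determinants of the covariances then gives `σ₁ = σ₂`, and inverting the covariances
gives `M₁ᵀ M₁ = M₂ᵀ M₂`.

Suppose the set `S` of vertices whose rows in `B₁` and `B₂` differ is nonempty. Rows outside `S`
contribute equally to both Gram matrices, so `∑ i ∈ S, M₁ i k * M₁ i l = ∑ i ∈ S, M₂ i k * M₂ i l`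
for all `k, l`. Let `j ∈ S` have no child of `B₁` in `S`. Taking `k = l = j`, the left side is `1`,
while the right side is `1` plus the sum of the squares `(B₂ i j) ^ 2` over `i ∈ S` other than `j`;
so `j` has no child of `B₂` in `S` either. With `k = j` and `l` arbitrary the identity now reads
`M₁ j l = M₂ j l`, which contradicts `j ∈ S`. (`eq_of_gram_eq`)
-/

open Matrix

/-- `B` is a DAG matrix: its support digraph, with an edge `k → j` whenever `B j k ≠ 0`,
contains no directed cycle, i.e. no sequence `i₀ → i₁ → ⋯ → i_m = i₀` with `m ≥ 1`. -/
def IsDAGMatrix {n : ℕ} (B : Matrix (Fin n) (Fin n) ℝ) : Prop :=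
  ¬ ∃ (m : ℕ) (w : ℕ → Fin n), 1 ≤ m ∧ w 0 = w m ∧ ∀ t < m, B (w (t + 1)) (w t) ≠ 0

/-- A nonempty vertex set of an acyclic digraph contains a vertex none of whose children lies
in that set. -/
lemma IsDAGMatrix.exists_sink {n : ℕ} {B : Matrix (Fin n) (Fin n) ℝ} (hB : IsDAGMatrix B)
    (S : Finset (Fin n)) (hS : S.Nonempty) : ∃ j ∈ S, ∀ i ∈ S, B i j = 0 := by
  by_contra! hcon
  obtain ⟨j₀, hj₀⟩ := hS
  choose! f hfS hf using hcon
  have hmem : ∀ t, f^[t] j₀ ∈ S := by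
    intro t
    induction t with
    | zero => exact hj₀
    | succ t ih => rw [Function.iterate_succ_apply']; exact hfS _ ih
  -- The walk that always moves to a child in `S` revisits a vertex, at times `a < b`.
  obtain ⟨a, b, hne, hab⟩ := Finite.exists_ne_map_eq_of_infinite (fun t : ℕ => f^[t] j₀)
  wlog hlt : a < b generalizing a b
  · exact this b a hne.symm hab.symm (by omega)
  refine hB ⟨b - a, fun t => f^[a + t] j₀, by omega, ?_, fun t _ => ?_⟩
  · simpa [Nat.add_sub_cancel' hlt.le] using hab
  · change B (f^[(a + t) + 1] j₀) _ ≠ 0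
    rw [Function.iterate_succ_apply']
    exact hf _ (hmem _)

lemma IsDAGMatrix.diag_eq_zero {n : ℕ} {B : Matrix (Fin n) (Fin n) ℝ} (hB : IsDAGMatrix B)
    (j : Fin n) : B j j = 0 := by
  obtain ⟨i, hi, h⟩ := hB.exists_sink {j} (Finset.singleton_nonempty j)
  obtain rfl := Finset.mem_singleton.1 hi
  exact h i hi

lemma IsDAGMatrix.det_one_sub {n : ℕ} {B : Matrix (Fin n) (Fin n) ℝ} (hB : IsDAGMatrix B) :
    (1 - B).det = 1 := by
  rw [Matrix.det_apply, Finset.sum_eq_single 1]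
  · simp [hB.diag_eq_zero]
  · intro π _ hπ
    have hne : π.support.Nonempty := by
      rw [Finset.nonempty_iff_ne_empty]
      simpa using hπ
    obtain ⟨j, hj, hsink⟩ := hB.exists_sink π.support hne
    -- The moved vertex `j` is sent to a moved vertex, hence to one that is not its child.
    have hzero : (1 - B) (π j) j = 0 := by
      rw [Matrix.sub_apply, Matrix.one_apply_ne (Equiv.Perm.mem_support.1 hj),
        hsink _ (Equiv.Perm.apply_mem_support.2 hj), sub_zero]
    have hprod : ∏ i, (1 - B) (π i) i = 0 := Finset.prod_eq_zero (Finset.mem_univ j) hzero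
    rw [hprod, smul_zero]
  · simp

/-- The Gram matrix of `1 - B₁` determines `B₁`. Of `B₂` only the vanishing of the diagonal is
needed. -/
lemma eq_of_gram_eq {n : ℕ} {B₁ B₂ : Matrix (Fin n) (Fin n) ℝ}
    (hB₁ : IsDAGMatrix B₁) (hd₂ : ∀ j, B₂ j j = 0)
    (h : (1 - B₁)ᵀ * (1 - B₁) = (1 - B₂)ᵀ * (1 - B₂)) : B₁ = B₂ := by
  classical
  by_contra hne
  let S : Finset (Fin n) := Finset.univ.filter fun i => ∃ k, B₁ i k ≠ B₂ i k
  have hS : S.Nonempty := by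
    by_contra hemp
    apply hne
    ext i k
    by_contra hik
    exact hemp ⟨i, by simpa [S] using ⟨k, hik⟩⟩
  obtain ⟨j, hj, hsink⟩ := hB₁.exists_sink S hS
  have hgram : ∀ k l, ∑ i ∈ S, (1 - B₁) i k * (1 - B₁) i l
      = ∑ i ∈ S, (1 - B₂) i k * (1 - B₂) i l := by
    intro k l
    have hkl := congrFun (congrFun h k) l
    simp only [Matrix.mul_apply, Matrix.transpose_apply] at hkl
    rw [← Finset.sum_add_sum_compl S, ← Finset.sum_add_sum_compl S] at hkl
    have hout : ∑ i ∈ Sᶜ, (1 - B₁) i k * (1 - B₁) i l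
        = ∑ i ∈ Sᶜ, (1 - B₂) i k * (1 - B₂) i l := by
      refine Finset.sum_congr rfl fun i hi => ?_
      have hrow : ∀ k, B₁ i k = B₂ i k := by simpa [S] using hi
      simp only [Matrix.sub_apply, hrow]
    linarith
  have hcol₁ : ∀ i ∈ S, i ≠ j → (1 - B₁) i j = 0 := fun i hi hij => by
    rw [Matrix.sub_apply, Matrix.one_apply_ne hij, hsink i hi, sub_zero]
  have hone₁ : (1 - B₁) j j = 1 := by simp [hsink j hj]
  have hone₂ : (1 - B₂) j j = 1 := by simp [hd₂]
  have hcol₂ : ∀ i ∈ S, i ≠ j → (1 - B₂) i j = 0 := by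
    have hjj := hgram j j
    rw [Finset.sum_eq_single_of_mem j hj fun i hi hij => by rw [hcol₁ i hi hij, zero_mul],
      ← Finset.add_sum_erase S _ hj, hone₁, hone₂] at hjj
    have hsq : ∑ i ∈ S.erase j, (1 - B₂) i j * (1 - B₂) i j = 0 := by linarith
    rw [Finset.sum_eq_zero_iff_of_nonneg fun i _ => mul_self_nonneg _] at hsq
    exact fun i hi hij => mul_self_eq_zero.1 (hsq i (Finset.mem_erase.2 ⟨hij, hi⟩))
  obtain ⟨k, hk⟩ : ∃ k, B₁ j k ≠ B₂ j k := by simpa [S] using hj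
  have hjk := hgram j k
  rw [Finset.sum_eq_single_of_mem j hj fun i hi hij => by rw [hcol₁ i hi hij, zero_mul],
    Finset.sum_eq_single_of_mem j hj fun i hi hij => by rw [hcol₂ i hi hij, zero_mul],
    hone₁, hone₂, one_mul, one_mul, Matrix.sub_apply, Matrix.sub_apply] at hjk
  exact hk (sub_right_injective hjk)

/-- Identifiability of linear SEMs with equal error variances (covariance-matrix form):
two linear SEMs `X = BᵢX + σᵢU` with `Cov(U) = I` and acyclic coefficient matrices that
induce the same covariance matrix `(I − Bᵢ)⁻¹ σᵢ²I ((I − Bᵢ)⁻¹)ᵀ` must have the same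
coefficient matrix and the same noise variance. -/
theorem dag_sem_equal_variance_identifiable {n : ℕ} (hn : 1 ≤ n)
    (B₁ B₂ : Matrix (Fin n) (Fin n) ℝ)
    (hB₁ : IsDAGMatrix B₁) (hB₂ : IsDAGMatrix B₂)
    (σ₁ σ₂ : ℝ) (hσ₁ : 0 < σ₁) (hσ₂ : 0 < σ₂)
    (h : (1 - B₁)⁻¹ * (σ₁ ^ 2 • (1 : Matrix (Fin n) (Fin n) ℝ)) * ((1 - B₁)⁻¹)ᵀ
       = (1 - B₂)⁻¹ * (σ₂ ^ 2 • (1 : Matrix (Fin n) (Fin n) ℝ)) * ((1 - B₂)⁻¹)ᵀ) :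
    B₁ = B₂ ∧ σ₁ = σ₂ := by
  have hd₁ := hB₁.det_one_sub
  have hd₂ := hB₂.det_one_sub
  have hσ : σ₁ = σ₂ := by
    have hdet := congrArg Matrix.det h
    simp only [Matrix.det_mul, Matrix.det_transpose, Matrix.det_nonsing_inv, hd₁, hd₂,
      Matrix.det_smul, Ring.inverse_one, Matrix.det_one, Fintype.card_fin, mul_one, one_mul]
      at hdet
    rw [← pow_mul, ← pow_mul] at hdet
    exact (pow_left_inj₀ hσ₁.le hσ₂.le (by omega)).1 hdet
  subst hσ
  refine ⟨eq_of_gram_eq hB₁ hB₂.diag_eq_zero ?_, rfl⟩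
  simp only [Matrix.mul_smul, Matrix.smul_mul, mul_one] at h
  have hinv := congrArg (·⁻¹) (smul_right_injective _ (pow_pos hσ₁ 2).ne' h)
  simpa only [Matrix.mul_inv_rev, Matrix.transpose_nonsing_inv,
    Matrix.nonsing_inv_nonsing_inv _ (show IsUnit (1 - B₁).det by simp [hd₁]),
    Matrix.nonsing_inv_nonsing_inv _ (show IsUnit (1 - B₂).det by simp [hd₂]),
    Matrix.nonsing_inv_nonsing_inv _ (show IsUnit (1 - B₁)ᵀ.det by
      rw [Matrix.det_transpose, hd₁]; exact isUnit_one),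
    Matrix.nonsing_inv_nonsing_inv _ (show IsUnit (1 - B₂)ᵀ.det by
      rw [Matrix.det_transpose, hd₂]; exact isUnit_one)] using hinv
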